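/- Let A and B be n×n type-II matrices. Suppose N_{A,B} contains a Schur invertible matrix G, and let H = Θ_{A,B}(G). Then N_{A,B} = {G∘F : F ∈ N_A}, and {Θ_{A,B}(M)·Hᵀ : M ∈ N_{A,B}} = N_{Aᵀ}. -/

import Mathlib

open Matrix

variable {m : Type*} [Fintype m] [DecidableEq m]

/-- The Schur (entrywise) inverse `A^(-)` of a matrix: `(A^(-))_{ij} = (A_{ij})⁻¹`. -/
noncomputable def sinv (A : Matrix m m ℂ) : Matrix m m ℂ := Matrix.of fun i j => (A i j)⁻¹

/-- A type-II matrix: a Schur invertible matrix `W` with `W * (W^(-))ᵀ = n • I`,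
where `n` is the size of the matrix. -/
def IsTypeII (A : Matrix m m ℂ) : Prop :=
  (∀ i j, A i j ≠ 0) ∧ A * (sinv A)ᵀ = (Fintype.card m : ℂ) • (1 : Matrix m m ℂ)

/-- `v_{ij} = (A e_i) ∘ (B e_j)`: the entrywise product of column `i` of `A`
with column `j` of `B`. -/
def colProd (A B : Matrix m m ℂ) (i j : m) : m → ℂ := fun k => A k i * B k j

/-- Membership in the Nomura algebra `N_{A,B}`: every `v_{ij}` is an eigenvector of `M`. -/
def InNomura (A B M : Matrix m m ℂ) : Prop :=
  ∀ i j, ∃ c : ℂ, M.mulVec (colProd A B i j) = c • colProd A B i j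

/-- `S = Θ_{A,B}(M)`: the matrix of eigenvalues, i.e. `M v_{ij} = S_{ij} v_{ij}` for all `i,j`. -/
def IsTheta (A B M S : Matrix m m ℂ) : Prop :=
  ∀ i j, M.mulVec (colProd A B i j) = S i j • colProd A B i j

/-- `(A,B)` is a Jones pair: `A` invertible, `B` Schur invertible, and
`X_A Δ_B X_A = Δ_B X_A Δ_B` and `X_A Δ_{Bᵀ} X_A = Δ_{Bᵀ} X_A Δ_{Bᵀ}`
as operators on matrices. -/
def IsJonesPair (A B : Matrix m m ℂ) : Prop :=
  IsUnit A ∧ (∀ i j, B i j ≠ 0) ∧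
  (∀ M : Matrix m m ℂ, A * (B ⊙ (A * M)) = B ⊙ (A * (B ⊙ M))) ∧
  (∀ M : Matrix m m ℂ, A * (Bᵀ ⊙ (A * M)) = Bᵀ ⊙ (A * (Bᵀ ⊙ M)))

/-- An invertible Jones pair: a Jones pair in which moreover `A` is Schur
invertible and `B` is invertible. -/
def IsInvertibleJonesPair (A B : Matrix m m ℂ) : Prop :=
  IsJonesPair A B ∧ (∀ i j, A i j ≠ 0) ∧ IsUnit B

/-- `W` is a spin model: for some `d` with `d² = n`, `(d⁻¹ W, W^(-))` is an
invertible Jones pair. -/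
def IsSpinModel (W : Matrix m m ℂ) : Prop :=
  ∃ d : ℂ, d ^ 2 = (Fintype.card m : ℂ) ∧ IsInvertibleJonesPair (d⁻¹ • W) (sinv W)

/-- Given an invertible Jones pair `(A,B)` with `A` symmetric, `K` is paired with
`H ∈ N_{A,B}` if `Kᵀ ∈ N_{A,Bᵀ}` and `Θ_{A,B}(H) = (Θ_{A,Bᵀ}(Kᵀ))ᵀ`. -/
def Paired (A B H K : Matrix m m ℂ) : Prop :=
  ∃ S : Matrix m m ℂ, IsTheta A B H S ∧ IsTheta A Bᵀ Kᵀ Sᵀ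

/-- The `4n × 4n` matrix with `4 × 4` block structure
`[[P, Q, R, R], [Q, P, R, R], [S, S, T, U], [S, S, U, T]]`. -/
def blockMat {n : ℕ} (P Q R S T U : Matrix (Fin n) (Fin n) ℂ) :
    Matrix (Fin 4 × Fin n) (Fin 4 × Fin n) ℂ :=
  Matrix.of fun x y =>
    (![![P, Q, R, R], ![Q, P, R, R], ![S, S, T, U], ![S, S, U, T]] x.1 y.1) x.2 y.2

/-- Yamada's `4n × 4n` matrix `V` built from `A`, `B` and `d` with `d² = n`. -/
noncomputable def Vmat {n : ℕ} (A B : Matrix (Fin n) (Fin n) ℂ) (d : ℂ) :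
    Matrix (Fin 4 × Fin n) (Fin 4 × Fin n) ℂ :=
  blockMat (d • A) (-(d • A)) (sinv B) (sinv B)ᵀ (d • A) (-(d • A))

/-!
Write `X_l` for row `l` of `X`, and `Δ_v` for the diagonal matrix of `v`. The relation
`S = Θ_{A,B}(M)` says that `Aᵀ Δ_{M_l} B = Δ_{A_l} S Δ_{B_l}` for every `l`. Taking determinants
shows that, for invertible `A` and `B`, a Schur invertible `G ∈ N_{A,B}` forces `A` and `B` to be
Schur invertible and `H = Θ_{A,B}(G)` to be invertible. Solving for `M` instead gives
`S (B_l ∘ b_k) = M_{lk} • (A_k ∘ A^(-)_l)`, where `b_k` is column `k` of `B⁻¹`. For `M = G` and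
`k = l` the right-hand side is a multiple of the all-ones vector, so all the `B_l ∘ b_l` are
multiples of one vector; since the entries `B_{lj} (B⁻¹)_{jl}` have row and column sums `1`, they
all equal `1 / n`, that is, `B` is type-II, and by symmetry so is `A`.

For type-II matrices, multiplying the row relations gives
`Θ_{A,C}(n • (F ∘ F')) = Θ_{A,B}(F) Θ_{B^(-),C}(F')`, inverting them gives
`Θ_{B^(-),A^(-)}(G^(-)) = n² • H⁻¹`, and the solved form gives both `Θ_A(N_A) = N_{Aᵀ}` and
`Θ_{A^(-),B^(-)}(Mᵀ) = Θ_{A,B}(M)`. Hence `M ↦ M ∘ G^(-)` and `M ↦ M ∘ Gᵀ` are bijections from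
`N_{A,B}` onto `N_A`, with inverses `F ↦ F ∘ G` and `F ↦ F ∘ (G^(-))ᵀ`. Up to a scalar, the second
bijection multiplies `Θ` on the right by `Hᵀ`.
-/

theorem mul_eq_inv_card_of_sum_eq_one {ι K : Type*} [Fintype ι] [Field K] {g u : ι → K}
    (hrow : ∀ l, ∑ j, g l * u j = 1) (hcol : ∀ j, ∑ l, g l * u j = 1) (l j : ι) :
    g l * u j = (Fintype.card ι : K)⁻¹ := by
  simp only [← Finset.mul_sum] at hrow
  simp only [← Finset.sum_mul] at hcol
  have hcard : (∑ i, g i) * ∑ i, u i = Fintype.card ι := by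
    simp [Finset.sum_mul, hrow]
  refine eq_inv_of_mul_eq_one_left ?_
  calc g l * u j * Fintype.card ι
      = (g l * ∑ i, u i) * ((∑ i, g i) * u j) := by rw [← hcard]; ring
    _ = 1 := by rw [hrow, hcol, mul_one]

section ThetaRelation

variable {ι : Type*}

theorem colProd_comm (A B : Matrix ι ι ℂ) (i j : ι) : colProd A B i j = colProd B A j i :=
  funext fun _ => mul_comm _ _

theorem sinv_sinv (A : Matrix ι ι ℂ) : sinv (sinv A) = A :=
  Matrix.ext fun _ _ => inv_inv _

theorem colProd_transpose_sinv_self {A : Matrix ι ι ℂ} (hA : ∀ i j, A i j ≠ 0) (l : ι) :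
    colProd Aᵀ (sinv Aᵀ) l l = 1 :=
  funext fun i => mul_inv_cancel₀ (hA l i)

theorem colProd_transpose_sinv_swap (A : Matrix ι ι ℂ) (i j : ι) :
    colProd (sinv A)ᵀ (sinv (sinv A)ᵀ) i j = colProd Aᵀ (sinv Aᵀ) j i :=
  funext fun k => by simp [colProd, sinv, mul_comm]

variable [Fintype ι] {A B M S : Matrix ι ι ℂ}

theorem IsTheta.swap (h : IsTheta A B M S) : IsTheta B A M Sᵀ := fun i j => by
  rw [colProd_comm, h j i, transpose_apply]

theorem IsTheta.smul (c : ℂ) (h : IsTheta A B M S) : IsTheta A B (c • M) (c • S) := fun i j => by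
  rw [smul_mulVec, h i j, Matrix.smul_apply, smul_assoc]

theorem inNomura_iff_exists_isTheta : InNomura A B M ↔ ∃ S, IsTheta A B M S := by
  simp only [InNomura, Classical.skolem]
  rfl

variable [DecidableEq ι]

theorem isTheta_iff_transpose_mul_diagonal_mul :
    IsTheta A B M S ↔ ∀ l, Aᵀ * diagonal (M l) * B = diagonal (A l) * S * diagonal (B l) := by
  have entry (i j l : ι) : (M *ᵥ colProd A B i j) l = (S i j • colProd A B i j) l ↔
      (Aᵀ * diagonal (M l) * B) i j = (diagonal (A l) * S * diagonal (B l)) i j := by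
    rw [mul_diagonal, diagonal_mul, mul_apply]
    simp only [mul_diagonal, transpose_apply, mulVec, dotProduct, colProd, Pi.smul_apply,
      smul_eq_mul, mul_left_comm, mul_comm]
  simp only [IsTheta, funext_iff, ← Matrix.ext_iff, entry]
  exact ⟨fun h l i j => h i j l, fun h i j l => h l i j⟩

theorem IsTheta.det_eq (h : IsTheta A B M S) (l : ι) :
    A.det * (∏ k, M l k) * B.det = (∏ i, A l i) * S.det * ∏ j, B l j := by
  simpa only [det_mul, det_transpose, det_diagonal] using
    congrArg det (isTheta_iff_transpose_mul_diagonal_mul.1 h l)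

theorem isTheta_iff_mulVec_colProd_inv (hA : ∀ i j, A i j ≠ 0) (hB : IsUnit B) :
    IsTheta A B M S ↔
      ∀ l k, S *ᵥ colProd Bᵀ B⁻¹ l k = M l k • colProd Aᵀ (sinv Aᵀ) k l := by
  have := hB.invertible
  have cancel_right (l : ι) : Aᵀ * diagonal (M l) * B = diagonal (A l) * S * diagonal (B l) ↔
      diagonal (A l) * (S * (diagonal (B l) * B⁻¹)) = Aᵀ * diagonal (M l) := by
    rw [eq_comm, ← mul_inv_eq_iff_eq_mul_of_invertible, Matrix.mul_assoc, Matrix.mul_assoc]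
  have entry (l k i : ι) :
      (diagonal (A l) * (S * (diagonal (B l) * B⁻¹))) i k = (Aᵀ * diagonal (M l)) i k ↔
        (S *ᵥ colProd Bᵀ B⁻¹ l k) i = (M l k • colProd Aᵀ (sinv Aᵀ) k l) i := by
    have hAli := hA l i
    rw [diagonal_mul, mul_diagonal, mul_apply]
    simp only [diagonal_mul, transpose_apply, mulVec, dotProduct, colProd, Pi.smul_apply,
      smul_eq_mul, sinv, of_apply]
    field_simp
  simp only [isTheta_iff_transpose_mul_diagonal_mul, cancel_right, ← Matrix.ext_iff, entry,
    funext_iff]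
  exact forall_congr' fun l => forall_comm

end ThetaRelation

section TypeII

variable {ι : Type*} [Fintype ι] [DecidableEq ι] {A : Matrix ι ι ℂ}

theorem diagonal_mul_diagonal_sinv (hA : ∀ i j, A i j ≠ 0) (l : ι) :
    diagonal (A l) * diagonal (sinv A l) = 1 := by
  rw [diagonal_mul_diagonal, ← diagonal_one]
  exact congrArg diagonal (funext fun j => mul_inv_cancel₀ (hA l j))

theorem isTypeII_sinv (hA : IsTypeII A) : IsTypeII (sinv A) :=
  ⟨fun i j => inv_ne_zero (hA.1 i j), by
    simpa [sinv_sinv] using congrArg transpose hA.2⟩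

theorem IsTypeII.mul_inv_card_smul_sinv_transpose [Nonempty ι] (hA : IsTypeII A) :
    A * ((Fintype.card ι : ℂ)⁻¹ • (sinv A)ᵀ) = 1 := by
  rw [Matrix.mul_smul, hA.2, inv_smul_smul₀ (by simp)]

theorem IsTypeII.isUnit [Nonempty ι] (hA : IsTypeII A) : IsUnit A :=
  .of_mul_eq_one _ hA.mul_inv_card_smul_sinv_transpose

theorem IsTypeII.inv_eq [Nonempty ι] (hA : IsTypeII A) :
    A⁻¹ = (Fintype.card ι : ℂ)⁻¹ • (sinv A)ᵀ :=
  inv_eq_right_inv hA.mul_inv_card_smul_sinv_transpose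

theorem isTypeII_of_apply_mul_inv_apply [Nonempty ι] (hA : IsUnit A)
    (h : ∀ i j, A i j * A⁻¹ j i = (Fintype.card ι : ℂ)⁻¹) : IsTypeII A := by
  have hn : (Fintype.card ι : ℂ) ≠ 0 := by simp
  have hA0 (i j : ι) : A i j ≠ 0 := left_ne_zero_of_mul (h i j ▸ inv_ne_zero hn)
  have hsinv : (sinv A)ᵀ = (Fintype.card ι : ℂ) • A⁻¹ := by
    ext j i
    refine inv_eq_of_mul_eq_one_right ?_
    rw [Matrix.smul_apply, smul_eq_mul, mul_left_comm, h, mul_inv_cancel₀ hn]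
  refine ⟨hA0, ?_⟩
  rw [hsinv, Matrix.mul_smul, mul_nonsing_inv _ ((isUnit_iff_isUnit_det A).1 hA)]

end TypeII

section SchurInvertibleElement

variable {ι : Type*} [Fintype ι] [DecidableEq ι] {A B C F F' G H M N P S T : Matrix ι ι ℂ}

theorem IsTheta.prod_mul_det_mul_prod_ne_zero (hA : IsUnit A) (hB : IsUnit B)
    (h : IsTheta A B M S) {l : ι} (hM : ∀ k, M l k ≠ 0) :
    (∏ i, A l i) * S.det * ∏ j, B l j ≠ 0 := by
  rw [isUnit_iff_isUnit_det, isUnit_iff_ne_zero] at hA hB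
  rw [← h.det_eq]
  exact mul_ne_zero (mul_ne_zero hA (Finset.prod_ne_zero_iff.2 fun k _ => hM k)) hB

theorem IsTheta.isUnit (hA : IsUnit A) (hB : IsUnit B) (h : IsTheta A B M S) {l : ι}
    (hM : ∀ k, M l k ≠ 0) : IsUnit S := by
  rw [isUnit_iff_isUnit_det, isUnit_iff_ne_zero]
  exact right_ne_zero_of_mul (left_ne_zero_of_mul (h.prod_mul_det_mul_prod_ne_zero hA hB hM))

theorem IsTheta.left_apply_ne_zero (hA : IsUnit A) (hB : IsUnit B) (h : IsTheta A B M S) {l : ι}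
    (hM : ∀ k, M l k ≠ 0) (i : ι) : A l i ≠ 0 :=
  Finset.prod_ne_zero_iff.1 (left_ne_zero_of_mul
    (left_ne_zero_of_mul (h.prod_mul_det_mul_prod_ne_zero hA hB hM))) i (Finset.mem_univ i)

theorem IsTheta.isTypeII_right [Nonempty ι] (hA : IsUnit A) (hB : IsUnit B)
    (hM : ∀ i j, M i j ≠ 0) (h : IsTheta A B M S) : IsTypeII B := by
  have hA0 (l : ι) := h.left_apply_ne_zero hA hB (hM l)
  have hS : IsUnit S.det :=
    (isUnit_iff_isUnit_det S).1 (h.isUnit hA hB (hM (Classical.arbitrary ι)))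
  have hBdet := (isUnit_iff_isUnit_det B).1 hB
  have factor (l j : ι) : B l j * B⁻¹ j l = M l l * (S⁻¹ *ᵥ 1) j := by
    have hl := (isTheta_iff_mulVec_colProd_inv hA0 hB).1 h l l
    rw [colProd_transpose_sinv_self hA0] at hl
    have hl' := congrArg (S⁻¹ *ᵥ ·) hl
    simp only [mulVec_mulVec, nonsing_inv_mul S hS, one_mulVec, mulVec_smul] at hl'
    exact congrFun hl' j
  have hrow (l : ι) : ∑ j, B l j * B⁻¹ j l = 1 := by
    rw [← mul_apply, mul_nonsing_inv B hBdet, one_apply_eq]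
  have hcol (j : ι) : ∑ l, B l j * B⁻¹ j l = 1 := by
    simp only [mul_comm (B _ j)]
    rw [← mul_apply, nonsing_inv_mul B hBdet, one_apply_eq]
  refine isTypeII_of_apply_mul_inv_apply hB fun l j => ?_
  simp only [factor] at hrow hcol ⊢
  exact mul_eq_inv_card_of_sum_eq_one hrow hcol l j

theorem isTheta_iff_mulVec_colProd_transpose [Nonempty ι] (hA : ∀ i j, A i j ≠ 0)
    (hB : IsTypeII B) :
    IsTheta A B M S ↔ ∀ l k, S *ᵥ colProd Bᵀ (sinv Bᵀ) l k =
      ((Fintype.card ι : ℂ) * M l k) • colProd Aᵀ (sinv Aᵀ) k l := by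
  have scale (l k : ι) : colProd Bᵀ B⁻¹ l k =
      (Fintype.card ι : ℂ)⁻¹ • colProd Bᵀ (sinv Bᵀ) l k := by
    rw [hB.inv_eq]
    exact funext fun j => mul_left_comm _ _ _
  simp only [isTheta_iff_mulVec_colProd_inv hA hB.isUnit, scale, mulVec_smul, mul_smul]
  exact forall₂_congr fun l k => inv_smul_eq_iff₀ (by simp)

theorem IsTheta.transpose [Nonempty ι] (hA : ∀ i j, A i j ≠ 0) (hB : IsTypeII B)
    (h : IsTheta A B M S) : IsTheta (sinv A) (sinv B) Mᵀ S := by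
  rw [isTheta_iff_mulVec_colProd_transpose hA hB] at h
  have hA' : ∀ i j, sinv A i j ≠ 0 := fun i j => inv_ne_zero (hA i j)
  rw [isTheta_iff_mulVec_colProd_transpose hA' (isTypeII_sinv hB)]
  intro l k
  rw [colProd_transpose_sinv_swap, colProd_transpose_sinv_swap, transpose_apply, h k l]

theorem isTheta_sinv_iff_isTheta_transpose [Nonempty ι] (hA : IsTypeII A) :
    IsTheta A (sinv A) F P ↔
      IsTheta Aᵀ (sinv Aᵀ) P ((Fintype.card ι : ℂ) • Fᵀ) := by
  rw [isTheta_iff_mulVec_colProd_transpose hA.1 (isTypeII_sinv hA), forall_comm]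
  simp only [colProd_transpose_sinv_swap]
  rfl

theorem inNomura_transpose_iff_exists_isTheta [Nonempty ι] (hA : IsTypeII A) :
    InNomura Aᵀ (sinv Aᵀ) P ↔ ∃ F, IsTheta A (sinv A) F P := by
  simp only [inNomura_iff_exists_isTheta, isTheta_sinv_iff_isTheta_transpose hA]
  refine ⟨fun ⟨T, hT⟩ => ⟨((Fintype.card ι : ℂ)⁻¹ • T)ᵀ, ?_⟩, fun ⟨F, hF⟩ => ⟨_, hF⟩⟩
  rwa [transpose_transpose, smul_inv_smul₀ (by simp)]

theorem IsTheta.hadamard (hB : IsTypeII B) (hF : IsTheta A B F S)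
    (hF' : IsTheta (sinv B) C F' T) :
    IsTheta A C ((Fintype.card ι : ℂ) • (F ⊙ F')) (S * T) := by
  rw [isTheta_iff_transpose_mul_diagonal_mul] at hF hF' ⊢
  intro l
  have hdiag : diagonal (((Fintype.card ι : ℂ) • (F ⊙ F')) l) =
      diagonal (F l) * ((Fintype.card ι : ℂ) • (1 : Matrix ι ι ℂ)) * diagonal (F' l) := by
    rw [Matrix.mul_smul, Matrix.mul_one, Matrix.smul_mul, diagonal_mul_diagonal, ← diagonal_smul]
    rfl
  calc Aᵀ * diagonal (((Fintype.card ι : ℂ) • (F ⊙ F')) l) * C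
      = (Aᵀ * diagonal (F l) * B) * ((sinv B)ᵀ * diagonal (F' l) * C) := by
        simp only [hdiag, ← hB.2, Matrix.mul_assoc]
    _ = diagonal (A l) * S * (diagonal (B l) * diagonal (sinv B l)) * T * diagonal (C l) := by
        simp only [hF l, hF' l, Matrix.mul_assoc]
    _ = diagonal (A l) * (S * T) * diagonal (C l) := by
        rw [diagonal_mul_diagonal_sinv hB.1, Matrix.mul_one, Matrix.mul_assoc (diagonal (A l))]

theorem InNomura.hadamard [Nonempty ι] (hB : IsTypeII B) (hM : InNomura A B M)
    (hN : InNomura (sinv B) C N) : InNomura A C (M ⊙ N) := by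
  obtain ⟨S, hS⟩ := inNomura_iff_exists_isTheta.1 hM
  obtain ⟨T, hT⟩ := inNomura_iff_exists_isTheta.1 hN
  have h := (hS.hadamard hB hT).smul (Fintype.card ι : ℂ)⁻¹
  rw [inv_smul_smul₀ (by simp)] at h
  exact inNomura_iff_exists_isTheta.2 ⟨_, h⟩

theorem IsTheta.sinv_inv [Nonempty ι] (hA : IsTypeII A) (hB : IsTypeII B)
    (hG : ∀ i j, G i j ≠ 0) (h : IsTheta A B G H) :
    IsTheta (sinv B) (sinv A) (sinv G) ((Fintype.card ι : ℂ) ^ 2 • H⁻¹) := by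
  have hdiag {D : Matrix ι ι ℂ} (hD : ∀ i j, D i j ≠ 0) (l : ι) :
      (diagonal (D l))⁻¹ = diagonal (sinv D l) :=
    inv_eq_right_inv (diagonal_mul_diagonal_sinv hD l)
  rw [isTheta_iff_transpose_mul_diagonal_mul] at h ⊢
  intro l
  have hinv : B⁻¹ * (diagonal (sinv G l) * A⁻¹ᵀ) =
      diagonal (sinv B l) * (H⁻¹ * diagonal (sinv A l)) := by
    simpa only [Matrix.mul_inv_rev, ← transpose_nonsing_inv, hdiag hA.1, hdiag hB.1, hdiag hG]
      using congrArg (·⁻¹) (h l)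
  simp only [hA.inv_eq, hB.inv_eq, transpose_smul, transpose_transpose, Matrix.smul_mul,
    Matrix.mul_smul, smul_smul, ← mul_inv] at hinv
  rw [inv_smul_eq_iff₀ (by simp)] at hinv
  simpa only [Matrix.mul_assoc, Matrix.smul_mul, Matrix.mul_smul, pow_two] using hinv

theorem setOf_inNomura_eq_setOf_hadamard [Nonempty ι] (hA : IsTypeII A) (hB : IsTypeII B)
    (hG : ∀ i j, G i j ≠ 0) (h : IsTheta A B G H) :
    {M | InNomura A B M} = {M | ∃ F, InNomura A (sinv A) F ∧ M = G ⊙ F} := by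
  have hGN : InNomura (sinv (sinv A)) B G :=
    inNomura_iff_exists_isTheta.2 ⟨H, by rwa [sinv_sinv]⟩
  have hGinv : InNomura (sinv B) (sinv A) (sinv G) :=
    inNomura_iff_exists_isTheta.2 ⟨_, h.sinv_inv hA hB hG⟩
  ext M
  constructor
  · refine fun hM => ⟨M ⊙ sinv G, InNomura.hadamard hB hM hGinv, ?_⟩
    ext i j
    exact (mul_div_cancel₀ _ (hG i j)).symm
  · rintro ⟨F, hF, rfl⟩
    rw [hadamard_comm]
    exact hF.hadamard (isTypeII_sinv hA) hGN

theorem setOf_isTheta_mul_transpose_eq_setOf_inNomura [Nonempty ι] (hA : IsTypeII A)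
    (hB : IsTypeII B) (hG : ∀ i j, G i j ≠ 0) (h : IsTheta A B G H) :
    {P | ∃ M S, IsTheta A B M S ∧ P = S * Hᵀ} = {P | InNomura Aᵀ (sinv Aᵀ) P} := by
  have hn : (Fintype.card ι : ℂ) ≠ 0 := by simp
  have hGt : IsTheta (sinv B) (sinv A) Gᵀ Hᵀ := (h.transpose hA.1 hB).swap
  obtain ⟨K, hK⟩ : ∃ K, IsTheta (sinv (sinv A)) B K (H⁻¹)ᵀ := by
    have hinv := (h.sinv_inv hA hB hG).transpose (isTypeII_sinv hB).1 (isTypeII_sinv hA)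
    have hscaled := hinv.swap.smul ((Fintype.card ι : ℂ) ^ 2)⁻¹
    rw [transpose_smul, inv_smul_smul₀ (pow_ne_zero 2 hn), sinv_sinv B] at hscaled
    exact ⟨_, hscaled⟩
  have hH : IsUnit H.det := (isUnit_iff_isUnit_det H).1 <|
    h.isUnit hA.isUnit hB.isUnit (hG (Classical.arbitrary ι))
  ext P
  refine Iff.trans ?_ (inNomura_transpose_iff_exists_isTheta hA).symm
  constructor
  · rintro ⟨M, S, hM, rfl⟩
    exact ⟨_, hM.hadamard hB hGt⟩
  · rintro ⟨F, hF⟩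
    refine ⟨_, P * (H⁻¹)ᵀ, hF.hadamard (isTypeII_sinv hA) hK, ?_⟩
    rw [Matrix.mul_assoc, ← transpose_mul, mul_nonsing_inv H hH, transpose_one, Matrix.mul_one]

end SchurInvertibleElement

theorem NAB_from_schur_invertible_element_general {ι : Type*} [Fintype ι] [DecidableEq ι]
    [Nonempty ι] {A B G H : Matrix ι ι ℂ} (hA : IsUnit A) (hB : IsUnit B)
    (hG : ∀ i j, G i j ≠ 0) (hGH : IsTheta A B G H) :
    {M | InNomura A B M} = {M | ∃ F, InNomura A (sinv A) F ∧ M = G ⊙ F} ∧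
    {P | ∃ M S, IsTheta A B M S ∧ P = S * Hᵀ} = {P | InNomura Aᵀ (sinv Aᵀ) P} := by
  have hB2 : IsTypeII B := hGH.isTypeII_right hA hB hG
  have hA2 : IsTypeII A := hGH.swap.isTypeII_right hB hA hG
  exact ⟨setOf_inNomura_eq_setOf_hadamard hA2 hB2 hG hGH,
    setOf_isTheta_mul_transpose_eq_setOf_inNomura hA2 hB2 hG hGH⟩

theorem NAB_from_schur_invertible_element {n : ℕ} (hn : 0 < n)
    (A B G H : Matrix (Fin n) (Fin n) ℂ)
    (hA : IsTypeII A) (hB : IsTypeII B)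
    (hGs : ∀ i j, G i j ≠ 0) (hGH : IsTheta A B G H) :
    {M : Matrix (Fin n) (Fin n) ℂ | InNomura A B M} =
      {M : Matrix (Fin n) (Fin n) ℂ | ∃ F, InNomura A (sinv A) F ∧ M = G ⊙ F} ∧
    {P : Matrix (Fin n) (Fin n) ℂ | ∃ M S, IsTheta A B M S ∧ P = S * Hᵀ} =
      {P : Matrix (Fin n) (Fin n) ℂ | InNomura Aᵀ (sinv Aᵀ) P} := by
  have : NeZero n := ⟨hn.ne'⟩
  exact NAB_from_schur_invertible_element_general hA.isUnit hB.isUnit hGs hGH
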